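/- arXiv:1804.10224 — 3 statements merged into one kernel-verified Lean document; each statement's English description precedes it below -/
import Mathlib

section
/- Suppose the sequences S_n(τ), S̄_n(τ) ∈ ℂ^N, v_n(τ) ∈ ℂ, ψ_n(τ) ∈ ℂ, φ_n(τ), χ_n(τ) ∈ ℂ^N (n ∈ ℤ, τ ∈ ℝ, all differentiable in τ) satisfy, for all n and τ: (A) the spectral problem v_n(ψ_{n+1} + ψ_{n−1}) = λ ψ_n − ⟨S_n, φ_n⟩ − ⟨χ_n, S̄_n⟩, φ_{n+1} − φ_n = (i/2) S̄_n(ψ_{n+1} + ψ_{n−1}), χ_{n+1} + χ_n = (i/2) S_n(ψ_{n+1} + ψ_{n−1}); (B) the higher time evolution ψ_{n,τ} = v_n v_{n+1}(ψ_{n+2} + ψ_n) − v_n v_{n−1}(ψ_n + ψ_{n−2}) + (i/2) v_n B_n (ψ_{n+1} + ψ_{n−1}), φ_{n,τ} = (i/2) v_n v_{n+1} S̄_{n−1}(ψ_{n+2} + ψ_n) + (i/2) v_n v_{n−1} S̄_{n−2}(ψ_{n+1} + ψ_{n−1}) + (i/2) v_n v_{n−1} S̄_{n+1}(ψ_n +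 ψ_{n−2}) + (i/2) v_{n−1} v_{n−2} S̄_n(ψ_{n−1} + ψ_{n−3}) − (1/4) v_n B_n S̄_{n−1}(ψ_{n+1} + ψ_{n−1}) + (1/4) v_{n−1} B_{n−1} S̄_n(ψ_n + ψ_{n−2}), and χ_{n,τ} = (i/2) v_n v_{n+1} S_{n−1}(ψ_{n+2} + ψ_n) − (i/2) v_n v_{n−1} S_{n−2}(ψ_{n+1} + ψ_{n−1}) + (i/2) v_n v_{n−1} S_{n+1}(ψ_n + ψ_{n−2}) − (i/2) v_{n−1} v_{n−2} S_n(ψ_{n−1} + ψ_{n−3}) − (1/4) v_n B_n S_{n−1}(ψ_{n+1} + ψ_{n−1}) − (1/4) v_{n−1} B_{n−1} S_n(ψ_n + ψ_{n−2}); and suppose ψ_{n+1}(τ) + ψ_{n−1}(τ) ≠ 0 for all n and τ. Then (S, S̄, v) satisfies the higher discrete multicomponent Yajima–Oikawa system (dgvhYO): S_{n,τ} = v_n v_{n+1}(S_{n+2} + S_n) − v_n v_{n−1}(S_n + S_{n−2}) + (i/2) v_n B_n (S_{n+1} + S_{n−1}); S̄_{n,τ} = v_n v_{n+1}(S̄_{n+2}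 + S̄_n) − v_n v_{n−1}(S̄_n + S̄_{n−2}) − (i/2) v_n B_n (S̄_{n+1} + S̄_{n−1}); v_{n,τ} = 2 v_n² (v_{n+1} − v_{n−1}) + (i/2) v_n v_{n+1}(⟨S_{n+2}, S̄_n⟩ − ⟨S_n, S̄_{n+2}⟩) − (i/2) v_n v_{n−1}(⟨S_n, S̄_{n−2}⟩ − ⟨S_{n−2}, S̄_n⟩) − (1/4) v_n B_n (⟨S_{n+1}, S̄_n⟩ + ⟨S_n, S̄_{n+1}⟩ − ⟨S_n, S̄_{n−1}⟩ − ⟨S_{n−1}, S̄_n⟩). -/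
open Complex BigOperators

/-- Bilinear pairing on `ℂ^N` (no complex conjugation). -/
noncomputable def pair {N : ℕ} (a b : Fin N → ℂ) : ℂ := ∑ k, a k * b k

/-! Both `S` and `S̄` are the source of a discrete potential: `x_{n+1} - σ x_n = (i/2) Q_n s_n` with
`Q_n = ψ_{n+1} + ψ_{n-1}`, where `σ = 1` for `(φ, S̄)` and `σ = -1` for `(χ, S)`. Differentiating
this relation and dividing by `Q_n` gives the evolution of `s_n`. Next, applying the (linear) flow
of `ψ` to the spectral problem `λ ψ_n = v_n Q_n + ⟨S_n, φ_n⟩ + ⟨χ_n, S̄_n⟩` and comparing with its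
time derivative, all occurrences of `φ` and `χ` cancel, as do the diagonal products `⟨S_m, S̄_m⟩`,
which enter with opposite signs `σ`. What is left is `Q_n` times the evolution of `v_n`. -/

section NeighborSum

variable {E : Type*} [Add E]

/-- The sum `x_{n+1} + x_{n-1}` of the values at the two lattice neighbours of `n`, the building
block of the spectral problem and of all the flows. -/
def neighborSum (x : ℤ → E) (n : ℤ) : E := x (n + 1) + x (n - 1)

theorem neighborSum_apply (x : ℤ → E) (n : ℤ) : neighborSum x n = x (n + 1) + x (n - 1) := rfl

theorem neighborSum_add_one (x : ℤ → E) (n : ℤ) : neighborSum x (n + 1) = x (n + 2) + x n := by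
  simp only [neighborSum, Int.add_assoc, Int.reduceAdd, Int.add_sub_cancel]

theorem neighborSum_sub_one (x : ℤ → E) (n : ℤ) : neighborSum x (n - 1) = x n + x (n - 2) := by
  simp only [neighborSum, Int.sub_sub, Int.reduceAdd, Int.sub_add_cancel]

theorem neighborSum_sub_two (x : ℤ → E) (n : ℤ) :
    neighborSum x (n - 2) = x (n - 1) + x (n - 3) := by
  rw [neighborSum]; congr 2 <;> ring

end NeighborSum

section SequenceIdentities

variable {E F : Type*} [AddCommGroup E] [Module ℂ E] [AddCommGroup F] [Module ℂ F]

/-- The linear higher Yajima–Oikawa flow with background `(v, B)`. The coefficient `c` is `i/2` for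
the evolution of `ψ` and `S`, and `-i/2` for that of `S̄`. -/
noncomputable def higherFlow (v B : ℤ → ℂ) (c : ℂ) (x : ℤ → E) (n : ℤ) : E :=
  (v n * v (n + 1)) • neighborSum x (n + 1) - (v n * v (n - 1)) • neighborSum x (n - 1)
    + (c * v n * B n) • neighborSum x n

/-- The relation `x_{n+1} - σ x_n = (i/2) (ψ_{n+1} + ψ_{n-1}) s_n` of the spectral problem, making
`x` a discrete potential of `s`: `σ = 1` for `(φ, S̄)` and `σ = -1` for `(χ, S)`. -/
def IsPotential (ψ : ℤ → ℂ) (σ : ℂ) (x s : ℤ → E) : Prop :=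
  ∀ n, x (n + 1) - σ • x n = (I / 2 * neighborSum ψ n) • s n

/-- The evolution of the potentials of `s` in the sense of `IsPotential`: that of `φ` for `σ = 1`
and that of `χ` for `σ = -1`. -/
noncomputable def potentialFlow (v B ψ : ℤ → ℂ) (σ : ℂ) (s : ℤ → E) (n : ℤ) : E :=
  (I / 2 * v n * v (n + 1) * neighborSum ψ (n + 1)) • s (n - 1)
    + (σ * (I / 2) * v n * v (n - 1) * neighborSum ψ n) • s (n - 2)
    + (I / 2 * v n * v (n - 1) * neighborSum ψ (n - 1)) • s (n + 1)
    + (σ * (I / 2) * v (n - 1) * v (n - 2) * neighborSum ψ (n - 2)) • s n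
    - (1 / 4 * v n * B n * neighborSum ψ n) • s (n - 1)
    + (σ * (1 / 4) * v (n - 1) * B (n - 1) * neighborSum ψ (n - 1)) • s n

/-- The evolution of `v` in the higher Yajima–Oikawa system. -/
noncomputable def coefficientFlow (p : E →ₗ[ℂ] F →ₗ[ℂ] ℂ) (v B : ℤ → ℂ) (S : ℤ → E) (Sb : ℤ → F)
    (n : ℤ) : ℂ :=
  2 * v n ^ 2 * (v (n + 1) - v (n - 1))
    + I / 2 * v n * v (n + 1) * (p (S (n + 2)) (Sb n) - p (S n) (Sb (n + 2)))
    - I / 2 * v n * v (n - 1) * (p (S n) (Sb (n - 2)) - p (S (n - 2)) (Sb n))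
    - 1 / 4 * v n * B n * (p (S (n + 1)) (Sb n) + p (S n) (Sb (n + 1))
      - p (S n) (Sb (n - 1)) - p (S (n - 1)) (Sb n))

variable {v B ψ : ℤ → ℂ} {σ : ℂ}

theorem higherFlow_add (c : ℂ) (x y : ℤ → E) (n : ℤ) :
    higherFlow v B c (fun m => x m + y m) n = higherFlow v B c x n + higherFlow v B c y n := by
  simp only [higherFlow, neighborSum]
  module

theorem higherFlow_const_mul (c a : ℂ) (x : ℤ → ℂ) (n : ℤ) :
    higherFlow v B c (fun m => a * x m) n = a * higherFlow v B c x n := by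
  simp only [higherFlow, neighborSum, smul_eq_mul]
  ring

theorem potentialFlow_add_one_sub (hσ : σ * σ = 1) (s : ℤ → E) (n : ℤ) :
    potentialFlow v B ψ σ s (n + 1) - σ • potentialFlow v B ψ σ s n =
      (I / 2 * neighborSum (higherFlow v B (I / 2) ψ) n) • s n
        + (I / 2 * neighborSum ψ n) • higherFlow v B (-(σ * (I / 2))) s n := by
  have hI : I * I = -1 := I_mul_I
  have e : n + 1 - 2 = n - 1 := by ring
  simp only [potentialFlow, higherFlow, neighborSum, Int.add_assoc, Int.sub_sub, Int.reduceAdd,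
    Int.add_sub_cancel, Int.sub_add_cancel, e, smul_eq_mul]
  match_scalars <;> grind

theorem IsPotential.sub_one_sub {x s : ℤ → E} (h : IsPotential ψ σ x s) (hσ : σ * σ = 1) (n : ℤ) :
    x (n - 1) - σ • x n = -(σ * (I / 2) * neighborSum ψ (n - 1)) • s (n - 1) := by
  have hn := h (n - 1)
  rw [Int.sub_add_cancel] at hn
  linear_combination (norm := module) (-σ) • hn - hσ • x (n - 1)

theorem IsPotential.add_two_sub {x s : ℤ → E} (h : IsPotential ψ σ x s) (hσ : σ * σ = 1) (n : ℤ) :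
    x (n + 2) - x n =
      (I / 2 * neighborSum ψ (n + 1)) • s (n + 1) + (σ * (I / 2) * neighborSum ψ n) • s n := by
  have hn := h (n + 1)
  rw [Int.add_assoc, one_add_one_eq_two] at hn
  linear_combination (norm := module) hn + σ • h n + hσ • x n

theorem IsPotential.sub_two_sub {x s : ℤ → E} (h : IsPotential ψ σ x s) (hσ : σ * σ = 1) (n : ℤ) :
    x (n - 2) - x n =
      -((I / 2 * neighborSum ψ (n - 1)) • s (n - 1)
        + (σ * (I / 2) * neighborSum ψ (n - 2)) • s (n - 2)) := by
  have hn := h.add_two_sub hσ (n - 2)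
  rw [Int.sub_add_cancel, show n - 2 + 1 = n - 1 by ring] at hn
  rw [← hn, neg_sub]

theorem IsPotential.higherFlow_pairing_sub {x s : ℤ → F} (h : IsPotential ψ σ x s)
    (hσ : σ * σ = 1) (p : E →ₗ[ℂ] F →ₗ[ℂ] ℂ) (y : ℤ → E) (n : ℤ) :
    higherFlow v B (I / 2) (fun m => p (y m) (x m)) n - p (higherFlow v B (σ * (I / 2)) y n) (x n) =
      I / 2 * v n * v (n + 1) * (neighborSum ψ (n + 1) * p (y (n + 2)) (s (n + 1))
          + σ * neighborSum ψ n * p (y (n + 2)) (s n))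
        + I / 2 * v n * v (n - 1) * (neighborSum ψ (n - 1) * p (y (n - 2)) (s (n - 1))
          + σ * neighborSum ψ (n - 2) * p (y (n - 2)) (s (n - 2)))
        - 1 / 4 * v n * B n * (neighborSum ψ n * p (y (n + 1)) (s n)
          - σ * neighborSum ψ (n - 1) * p (y (n - 1)) (s (n - 1))) := by
  have hI : I * I = -1 := I_mul_I
  have h₁ := congrArg (p (y (n + 1))) (h n)
  have h₂ := congrArg (p (y (n - 1))) (h.sub_one_sub hσ n)
  have h₃ := congrArg (p (y (n + 2))) (h.add_two_sub hσ n)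
  have h₄ := congrArg (p (y (n - 2))) (h.sub_two_sub hσ n)
  simp only [map_sub, map_add, map_neg, map_smul, smul_eq_mul] at h₁ h₂ h₃ h₄
  simp only [higherFlow, neighborSum_add_one y, neighborSum_sub_one y, neighborSum_apply y,
    neighborSum_add_one fun m => p (y m) (x m), neighborSum_sub_one fun m => p (y m) (x m),
    neighborSum_apply fun m => p (y m) (x m), map_sub, map_add, map_smul, smul_eq_mul,
    LinearMap.add_apply, LinearMap.sub_apply, LinearMap.smul_apply]
  linear_combination v n * v (n + 1) * h₃ - v n * v (n - 1) * h₄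
    + I / 2 * v n * B n * (h₁ + h₂) + 1 / 4 * v n * B n * (neighborSum ψ n * p (y (n + 1)) (s n)
          - σ * neighborSum ψ (n - 1) * p (y (n - 1)) (s (n - 1))) * hI

theorem higherFlow_mul_neighborSum (v B ψ : ℤ → ℂ) (n : ℤ) :
    higherFlow v B (I / 2) (fun m => v m * neighborSum ψ m) n =
      v n * neighborSum (higherFlow v B (I / 2) ψ) n
        + 2 * v n ^ 2 * (v (n + 1) - v (n - 1)) * neighborSum ψ n
        - I / 2 * v n * (v (n + 1) * neighborSum ψ (n + 1) * (B (n + 1) - B n)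
          + v (n - 1) * neighborSum ψ (n - 1) * (B (n - 1) - B n)) := by
  simp only [higherFlow, neighborSum_add_one fun m => v m * neighborSum ψ m,
    neighborSum_sub_one fun m => v m * neighborSum ψ m,
    neighborSum_apply fun m => v m * neighborSum ψ m,
    neighborSum_apply (higherFlow v B (I / 2) ψ), Int.add_assoc, Int.sub_sub, Int.reduceAdd,
    Int.add_sub_cancel, Int.sub_add_cancel, smul_eq_mul]
  ring

theorem higherFlow_pairings_sub {p : E →ₗ[ℂ] F →ₗ[ℂ] ℂ} {S χ : ℤ → E} {Sb φ : ℤ → F}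
    (hB : ∀ m, B m = p (S (m + 1)) (Sb m) + p (S m) (Sb (m + 1)) + p (S m) (Sb (m - 1))
      + p (S (m - 1)) (Sb m))
    (hφ : IsPotential ψ 1 φ Sb) (hχ : IsPotential ψ (-1) χ S) (n : ℤ) :
    higherFlow v B (I / 2) (fun m => p (S m) (φ m) + p (χ m) (Sb m)) n
        - (p (higherFlow v B (I / 2) S n) (φ n) + p (S n) (potentialFlow v B ψ 1 Sb n))
        - (p (potentialFlow v B ψ (-1) S n) (Sb n) + p (χ n) (higherFlow v B (-(I / 2)) Sb n)) =
      neighborSum ψ n * (coefficientFlow p v B S Sb n - 2 * v n ^ 2 * (v (n + 1) - v (n - 1)))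
        + I / 2 * v n * (v (n + 1) * neighborSum ψ (n + 1) * (B (n + 1) - B n)
          + v (n - 1) * neighborSum ψ (n - 1) * (B (n - 1) - B n)) := by
  have h₁ := hφ.higherFlow_pairing_sub (v := v) (B := B) (by norm_num) p S n
  have h₂ := hχ.higherFlow_pairing_sub (v := v) (B := B) (by norm_num) p.flip Sb n
  rw [one_mul] at h₁
  rw [neg_one_mul] at h₂
  have hB₁ : B (n + 1) - B n = p (S (n + 2)) (Sb (n + 1)) + p (S (n + 1)) (Sb (n + 2))
      - p (S n) (Sb (n - 1)) - p (S (n - 1)) (Sb n) := by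
    rw [hB, hB, Int.add_sub_cancel, Int.add_assoc, one_add_one_eq_two]
    ring
  have hB₂ : B (n - 1) - B n = p (S (n - 1)) (Sb (n - 2)) + p (S (n - 2)) (Sb (n - 1))
      - p (S (n + 1)) (Sb n) - p (S n) (Sb (n + 1)) := by
    rw [hB, hB, Int.sub_add_cancel, Int.sub_sub, one_add_one_eq_two]
    ring
  rw [higherFlow_add, hB₁, hB₂]
  simp only [LinearMap.flip_apply] at h₂
  simp only [potentialFlow, coefficientFlow, map_sub, map_add, map_smul, smul_eq_mul,
    LinearMap.add_apply, LinearMap.sub_apply, LinearMap.smul_apply]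
  linear_combination h₁ + h₂

theorem const_mul_higherFlow_sub {p : E →ₗ[ℂ] F →ₗ[ℂ] ℂ} {S χ : ℤ → E} {Sb φ : ℤ → F} {lam : ℂ}
    (hB : ∀ m, B m = p (S (m + 1)) (Sb m) + p (S m) (Sb (m + 1)) + p (S m) (Sb (m - 1))
      + p (S (m - 1)) (Sb m))
    (hψ : ∀ m, v m * neighborSum ψ m = lam * ψ m - p (S m) (φ m) - p (χ m) (Sb m))
    (hφ : IsPotential ψ 1 φ Sb) (hχ : IsPotential ψ (-1) χ S) (n : ℤ) :
    lam * higherFlow v B (I / 2) ψ n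
        - (p (higherFlow v B (I / 2) S n) (φ n) + p (S n) (potentialFlow v B ψ 1 Sb n))
        - (p (potentialFlow v B ψ (-1) S n) (Sb n) + p (χ n) (higherFlow v B (-(I / 2)) Sb n)) =
      neighborSum (higherFlow v B (I / 2) ψ) n * v n
        + neighborSum ψ n * coefficientFlow p v B S Sb n := by
  have hsplit : lam * higherFlow v B (I / 2) ψ n =
      higherFlow v B (I / 2) (fun m => v m * neighborSum ψ m) n
        + higherFlow v B (I / 2) (fun m => p (S m) (φ m) + p (χ m) (Sb m)) n := by
    rw [← higherFlow_const_mul, ← higherFlow_add]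
    congr 1
    funext m
    linear_combination -hψ m
  linear_combination hsplit + higherFlow_mul_neighborSum v B ψ n
    + higherFlow_pairings_sub (v := v) hB hφ hχ n

theorem higherFlow_eq (c : ℂ) (x : ℤ → E) (n : ℤ) :
    higherFlow v B c x n =
      (v n * v (n + 1)) • (x (n + 2) + x n) - (v n * v (n - 1)) • (x n + x (n - 2))
        + (c * v n * B n) • (x (n + 1) + x (n - 1)) := by
  rw [higherFlow, neighborSum_add_one, neighborSum_sub_one, neighborSum_apply]

theorem higherFlow_neg_eq (c : ℂ) (x : ℤ → E) (n : ℤ) :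
    higherFlow v B (-c) x n =
      (v n * v (n + 1)) • (x (n + 2) + x n) - (v n * v (n - 1)) • (x n + x (n - 2))
        - (c * v n * B n) • (x (n + 1) + x (n - 1)) := by
  rw [higherFlow_eq]
  module

theorem isPotential_one_iff {x s : ℤ → E} :
    IsPotential ψ 1 x s ↔
      ∀ n, x (n + 1) - x n = (I / 2 * (ψ (n + 1) + ψ (n - 1))) • s n := by
  simp only [IsPotential, one_smul, neighborSum_apply]

theorem isPotential_neg_one_iff {x s : ℤ → E} :
    IsPotential ψ (-1) x s ↔
      ∀ n, x (n + 1) + x n = (I / 2 * (ψ (n + 1) + ψ (n - 1))) • s n := by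
  simp only [IsPotential, neg_one_smul, sub_neg_eq_add, neighborSum_apply]

theorem potentialFlow_one_eq (s : ℤ → E) (n : ℤ) :
    potentialFlow v B ψ 1 s n =
      (I / 2 * v n * v (n + 1) * (ψ (n + 2) + ψ n)) • s (n - 1)
        + (I / 2 * v n * v (n - 1) * (ψ (n + 1) + ψ (n - 1))) • s (n - 2)
        + (I / 2 * v n * v (n - 1) * (ψ n + ψ (n - 2))) • s (n + 1)
        + (I / 2 * v (n - 1) * v (n - 2) * (ψ (n - 1) + ψ (n - 3))) • s n
        - (1 / 4 * v n * B n * (ψ (n + 1) + ψ (n - 1))) • s (n - 1)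
        + (1 / 4 * v (n - 1) * B (n - 1) * (ψ n + ψ (n - 2))) • s n := by
  rw [potentialFlow, neighborSum_add_one, neighborSum_sub_one, neighborSum_sub_two,
    neighborSum_apply]
  module

theorem potentialFlow_neg_one_eq (s : ℤ → E) (n : ℤ) :
    potentialFlow v B ψ (-1) s n =
      (I / 2 * v n * v (n + 1) * (ψ (n + 2) + ψ n)) • s (n - 1)
        - (I / 2 * v n * v (n - 1) * (ψ (n + 1) + ψ (n - 1))) • s (n - 2)
        + (I / 2 * v n * v (n - 1) * (ψ n + ψ (n - 2))) • s (n + 1)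
        - (I / 2 * v (n - 1) * v (n - 2) * (ψ (n - 1) + ψ (n - 3))) • s n
        - (1 / 4 * v n * B n * (ψ (n + 1) + ψ (n - 1))) • s (n - 1)
        - (1 / 4 * v (n - 1) * B (n - 1) * (ψ n + ψ (n - 2))) • s n := by
  rw [potentialFlow, neighborSum_add_one, neighborSum_sub_one, neighborSum_sub_two,
    neighborSum_apply]
  module

end SequenceIdentities

section Evolution

variable {E F : Type*} [NormedAddCommGroup E] [NormedSpace ℂ E]
  [NormedAddCommGroup F] [NormedSpace ℂ F] {τ : ℝ}

theorem hasDerivAt_of_smul_eq {c : ℝ → ℂ} {c' : ℂ} {s f : ℝ → E} {s' : E}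
    (hc : HasDerivAt c c' τ) (hf : HasDerivAt f (c' • s τ + c τ • s') τ)
    (hcs : ∀ t, c t • s t = f t) (h0 : c τ ≠ 0) : HasDerivAt s s' τ := by
  have hs : s =ᶠ[nhds τ] c⁻¹ • f := by
    filter_upwards [hc.continuousAt.eventually_ne h0] with t ht
    simp only [Pi.smul_apply', Pi.inv_apply, ← hcs, inv_smul_smul₀ ht]
  refine (((hc.inv h0).smul hf).congr_of_eventuallyEq hs).congr_deriv ?_
  rw [← hcs, Pi.inv_apply]
  match_scalars <;> field_simp
  ring

theorem hasDerivAt_pairing (p : E →L[ℂ] F →L[ℂ] ℂ) {a : ℝ → E} {b : ℝ → F} {a' : E} {b' : F}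
    (ha : HasDerivAt a a' τ) (hb : HasDerivAt b b' τ) :
    HasDerivAt (fun t => p (a t) (b t)) (p a' (b τ) + p (a τ) b') τ := by
  simpa [add_comm] using
    (p.bilinearRestrictScalars ℝ).hasDerivAt_of_bilinear (fun _ => ha) (fun _ => hb)

theorem hasDerivAt_neighborSum {x : ℤ → ℝ → E} {x' : ℤ → E} (hx : ∀ m, HasDerivAt (x m) (x' m) τ)
    (n : ℤ) : HasDerivAt (fun t => neighborSum (x · t) n) (neighborSum x' n) τ :=
  (hx (n + 1)).add (hx (n - 1))

theorem hasDerivAt_of_isPotential {x s : ℤ → ℝ → E} {ψ : ℤ → ℝ → ℂ} {v B : ℤ → ℂ} {σ : ℂ} {n : ℤ}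
    (hσ : σ * σ = 1) (hx : ∀ t, IsPotential (ψ · t) σ (x · t) (s · t))
    (hψ' : ∀ m, HasDerivAt (ψ m) (higherFlow v B (I / 2) (ψ · τ) m) τ)
    (hx' : ∀ m, HasDerivAt (x m) (potentialFlow v B (ψ · τ) σ (s · τ) m) τ)
    (h0 : neighborSum (ψ · τ) n ≠ 0) :
    HasDerivAt (s n) (higherFlow v B (-(σ * (I / 2))) (s · τ) n) τ := by
  have hdiff := (hx' (n + 1)).sub ((hx' n).const_smul σ)
  rw [potentialFlow_add_one_sub hσ] at hdiff
  exact hasDerivAt_of_smul_eq ((hasDerivAt_neighborSum hψ' n).const_mul (I / 2)) hdiff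
    (fun t => (hx t n).symm) (mul_ne_zero (div_ne_zero I_ne_zero two_ne_zero) h0)

theorem stmt2_general (p : E →L[ℂ] F →L[ℂ] ℂ) {S χ : ℤ → ℝ → E} {Sb φ : ℤ → ℝ → F}
    {v ψ : ℤ → ℝ → ℂ} {B : ℤ → ℂ} {lam : ℂ} {n : ℤ}
    (hB : ∀ m, B m = p (S (m + 1) τ) (Sb m τ) + p (S m τ) (Sb (m + 1) τ)
      + p (S m τ) (Sb (m - 1) τ) + p (S (m - 1) τ) (Sb m τ))
    (hψ : ∀ m t, v m t * neighborSum (ψ · t) m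
      = lam * ψ m t - p (S m t) (φ m t) - p (χ m t) (Sb m t))
    (hφ : ∀ t, IsPotential (ψ · t) 1 (φ · t) (Sb · t))
    (hχ : ∀ t, IsPotential (ψ · t) (-1) (χ · t) (S · t))
    (hψ' : ∀ m, HasDerivAt (ψ m) (higherFlow (v · τ) B (I / 2) (ψ · τ) m) τ)
    (hφ' : ∀ m, HasDerivAt (φ m) (potentialFlow (v · τ) B (ψ · τ) 1 (Sb · τ) m) τ)
    (hχ' : ∀ m, HasDerivAt (χ m) (potentialFlow (v · τ) B (ψ · τ) (-1) (S · τ) m) τ)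
    (h0 : neighborSum (ψ · τ) n ≠ 0) :
    HasDerivAt (S n) (higherFlow (v · τ) B (I / 2) (S · τ) n) τ
      ∧ HasDerivAt (Sb n) (higherFlow (v · τ) B (-(I / 2)) (Sb · τ) n) τ
      ∧ HasDerivAt (v n) (coefficientFlow p.toLinearMap₁₂ (v · τ) B (S · τ) (Sb · τ) n) τ := by
  have hS := hasDerivAt_of_isPotential (by norm_num) hχ hψ' hχ' h0
  have hSb := hasDerivAt_of_isPotential (by norm_num) hφ hψ' hφ' h0
  rw [neg_one_mul, neg_neg] at hS
  rw [one_mul] at hSb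
  have hspec := (((hψ' n).const_mul lam).sub (hasDerivAt_pairing p hS (hφ' n))).sub
    (hasDerivAt_pairing p (hχ' n) hSb)
  have hcompat := const_mul_higherFlow_sub (p := p.toLinearMap₁₂) hB (hψ · τ) (hφ τ) (hχ τ) n
  simp only [ContinuousLinearMap.toLinearMap₁₂_apply_apply_apply] at hcompat
  rw [hcompat] at hspec
  exact ⟨hS, hSb, hasDerivAt_of_smul_eq (hasDerivAt_neighborSum hψ' n) hspec
    (fun t => (mul_comm _ _).trans (hψ n t)) h0⟩

end Evolution

/-- The pairing of the statement as a continuous bilinear map. -/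
noncomputable def pairCLM (N : ℕ) : (Fin N → ℂ) →L[ℂ] (Fin N → ℂ) →L[ℂ] ℂ :=
  (LinearMap.mk₂ ℂ pair add_dotProduct smul_dotProduct dotProduct_add
    fun c a b => dotProduct_smul c a b).toContinuousBilinearMap

theorem stmt2 {N : ℕ} (hN : 1 ≤ N)
    (S Sb : ℤ → ℝ → Fin N → ℂ) (v ψ : ℤ → ℝ → ℂ)
    (φ χ : ℤ → ℝ → Fin N → ℂ) (lam : ℂ) (B : ℤ → ℝ → ℂ)
    (hSd : ∀ n, Differentiable ℝ (S n)) (hSbd : ∀ n, Differentiable ℝ (Sb n))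
    (hvd : ∀ n, Differentiable ℝ (v n)) (hψd : ∀ n, Differentiable ℝ (ψ n))
    (hφd : ∀ n, Differentiable ℝ (φ n)) (hχd : ∀ n, Differentiable ℝ (χ n))
    (hB : ∀ (n : ℤ) (τ : ℝ), B n τ
      = pair (S (n+1) τ) (Sb n τ) + pair (S n τ) (Sb (n+1) τ)
        + pair (S n τ) (Sb (n-1) τ) + pair (S (n-1) τ) (Sb n τ))
    (hL1 : ∀ (n : ℤ) (τ : ℝ), v n τ * (ψ (n+1) τ + ψ (n-1) τ)
      = lam * ψ n τ - pair (S n τ) (φ n τ) - pair (χ n τ) (Sb n τ))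
    (hL2 : ∀ (n : ℤ) (τ : ℝ), φ (n+1) τ - φ n τ
      = ((Complex.I/2) * (ψ (n+1) τ + ψ (n-1) τ)) • Sb n τ)
    (hL3 : ∀ (n : ℤ) (τ : ℝ), χ (n+1) τ + χ n τ
      = ((Complex.I/2) * (ψ (n+1) τ + ψ (n-1) τ)) • S n τ)
    (hM1 : ∀ (n : ℤ) (τ : ℝ), deriv (ψ n) τ
      = v n τ * v (n+1) τ * (ψ (n+2) τ + ψ n τ)
        - v n τ * v (n-1) τ * (ψ n τ + ψ (n-2) τ)
        + (Complex.I/2) * v n τ * B n τ * (ψ (n+1) τ + ψ (n-1) τ))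
    (hM2 : ∀ (n : ℤ) (τ : ℝ), deriv (φ n) τ
      = ((Complex.I/2) * v n τ * v (n+1) τ * (ψ (n+2) τ + ψ n τ)) • Sb (n-1) τ
        + ((Complex.I/2) * v n τ * v (n-1) τ * (ψ (n+1) τ + ψ (n-1) τ)) • Sb (n-2) τ
        + ((Complex.I/2) * v n τ * v (n-1) τ * (ψ n τ + ψ (n-2) τ)) • Sb (n+1) τ
        + ((Complex.I/2) * v (n-1) τ * v (n-2) τ * (ψ (n-1) τ + ψ (n-3) τ)) • Sb n τ
        - ((1/4) * v n τ * B n τ * (ψ (n+1) τ + ψ (n-1) τ)) • Sb (n-1) τ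
        + ((1/4) * v (n-1) τ * B (n-1) τ * (ψ n τ + ψ (n-2) τ)) • Sb n τ)
    (hM3 : ∀ (n : ℤ) (τ : ℝ), deriv (χ n) τ
      = ((Complex.I/2) * v n τ * v (n+1) τ * (ψ (n+2) τ + ψ n τ)) • S (n-1) τ
        - ((Complex.I/2) * v n τ * v (n-1) τ * (ψ (n+1) τ + ψ (n-1) τ)) • S (n-2) τ
        + ((Complex.I/2) * v n τ * v (n-1) τ * (ψ n τ + ψ (n-2) τ)) • S (n+1) τ
        - ((Complex.I/2) * v (n-1) τ * v (n-2) τ * (ψ (n-1) τ + ψ (n-3) τ)) • S n τ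
        - ((1/4) * v n τ * B n τ * (ψ (n+1) τ + ψ (n-1) τ)) • S (n-1) τ
        - ((1/4) * v (n-1) τ * B (n-1) τ * (ψ n τ + ψ (n-2) τ)) • S n τ)
    (hne : ∀ (n : ℤ) (τ : ℝ), ψ (n+1) τ + ψ (n-1) τ ≠ 0) :
    ∀ (n : ℤ) (τ : ℝ),
      (deriv (S n) τ
        = (v n τ * v (n+1) τ) • (S (n+2) τ + S n τ)
          - (v n τ * v (n-1) τ) • (S n τ + S (n-2) τ)
          + ((Complex.I/2) * v n τ * B n τ) • (S (n+1) τ + S (n-1) τ))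
      ∧ (deriv (Sb n) τ
        = (v n τ * v (n+1) τ) • (Sb (n+2) τ + Sb n τ)
          - (v n τ * v (n-1) τ) • (Sb n τ + Sb (n-2) τ)
          - ((Complex.I/2) * v n τ * B n τ) • (Sb (n+1) τ + Sb (n-1) τ))
      ∧ (deriv (v n) τ
        = 2 * (v n τ)^2 * (v (n+1) τ - v (n-1) τ)
          + (Complex.I/2) * v n τ * v (n+1) τ
            * (pair (S (n+2) τ) (Sb n τ) - pair (S n τ) (Sb (n+2) τ))
          - (Complex.I/2) * v n τ * v (n-1) τ
            * (pair (S n τ) (Sb (n-2) τ) - pair (S (n-2) τ) (Sb n τ))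
          - (1/4) * v n τ * B n τ
            * (pair (S (n+1) τ) (Sb n τ) + pair (S n τ) (Sb (n+1) τ)
              - pair (S n τ) (Sb (n-1) τ) - pair (S (n-1) τ) (Sb n τ))) := by
  intro n τ
  obtain ⟨hS, hSb, hv⟩ := stmt2_general (pairCLM N) (hB · τ) hL1
    (fun t => isPotential_one_iff.2 (hL2 · t)) (fun t => isPotential_neg_one_iff.2 (hL3 · t))
    (fun m => (hψd m τ).hasDerivAt.congr_deriv (by simp only [hM1, higherFlow_eq, smul_eq_mul]))
    (fun m => (hφd m τ).hasDerivAt.congr_deriv (by rw [hM2, potentialFlow_one_eq]))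
    (fun m => (hχd m τ).hasDerivAt.congr_deriv (by rw [hM3, potentialFlow_neg_one_eq])) (hne n τ)
  rw [hS.deriv, hSb.deriv, hv.deriv, higherFlow_eq, higherFlow_neg_eq]
  exact ⟨rfl, rfl, rfl⟩
end

section
/- Let S, S̄ : ℝ² → ℂ^N, L : ℝ² → ℂ, ψ : ℝ² → ℂ and φ : ℝ² → ℂ^N be functions of (x,t) of class C³, and let ζ ∈ ℂ. Suppose that for all (x,t): ψ_{xx} + L ψ + ⟨S, φ⟩ = ζ ψ, φ_x = i S̄ ψ, i ψ_t = ψ_{xx} + L ψ, and φ_t = S̄ ψ_x − S̄_x ψ, and suppose moreover that ψ(x,t) ≠ 0 for all (x,t). Then S̄ satisfies the long wave–short wave equation i S̄_t = −S̄_{xx} − L S̄ for all (x,t). -/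
open Complex BigOperators

/-- Partial derivative in the first (space) variable. -/
noncomputable def pdx {E : Type*} [NormedAddCommGroup E] [NormedSpace ℝ E]
    (f : ℝ → ℝ → E) : ℝ → ℝ → E := fun x t => deriv (fun y => f y t) x

/-- Partial derivative in the second (time) variable. -/
noncomputable def pdt {E : Type*} [NormedAddCommGroup E] [NormedSpace ℝ E]
    (f : ℝ → ℝ → E) : ℝ → ℝ → E := fun x t => deriv (fun s => f x s) t

/-! Write `u` for `S̄`. Compatibility `φ_xt = φ_tx` of `φ_x = c ψ u` with `φ_t = ψ_x u - ψ u_x`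
reads `c ψ u_t + c ψ_t u = ψ_xx u - ψ u_xx`, because the cross terms `ψ_x u_x` cancel. Eliminating
`c ψ_t = ψ_xx + L ψ` cancels `ψ_xx u` as well and leaves `ψ (c u_t + u_xx + L u) = 0`. The long
wave–short wave equation is the case `c = i`. -/

section PartialDerivatives

variable {E : Type*} [NormedAddCommGroup E] [NormedSpace ℝ E] {f : ℝ → ℝ → E} {x t : ℝ}

theorem hasDerivAt_fst_of_differentiableAt
    (hf : DifferentiableAt ℝ (Function.uncurry f) (x, t)) :
    HasDerivAt (fun y => f y t) (fderiv ℝ (Function.uncurry f) (x, t) (1, 0)) x :=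
  hf.hasFDerivAt.comp_hasDerivAt (f := fun y : ℝ => (y, t)) x
    ((hasDerivAt_id' x).prodMk (hasDerivAt_const x t))

theorem hasDerivAt_snd_of_differentiableAt
    (hf : DifferentiableAt ℝ (Function.uncurry f) (x, t)) :
    HasDerivAt (fun s => f x s) (fderiv ℝ (Function.uncurry f) (x, t) (0, 1)) t :=
  hf.hasFDerivAt.comp_hasDerivAt t ((hasDerivAt_const t x).prodMk (hasDerivAt_id' t))

theorem pdx_eq_fderiv (hf : DifferentiableAt ℝ (Function.uncurry f) (x, t)) :
    pdx f x t = fderiv ℝ (Function.uncurry f) (x, t) (1, 0) :=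
  (hasDerivAt_fst_of_differentiableAt hf).deriv

theorem pdt_eq_fderiv (hf : DifferentiableAt ℝ (Function.uncurry f) (x, t)) :
    pdt f x t = fderiv ℝ (Function.uncurry f) (x, t) (0, 1) :=
  (hasDerivAt_snd_of_differentiableAt hf).deriv

theorem uncurry_pdx (hf : Differentiable ℝ (Function.uncurry f)) :
    Function.uncurry (pdx f) = fun p => fderiv ℝ (Function.uncurry f) p (1, 0) :=
  funext fun p => pdx_eq_fderiv (hf p)

theorem uncurry_pdt (hf : Differentiable ℝ (Function.uncurry f)) :
    Function.uncurry (pdt f) = fun p => fderiv ℝ (Function.uncurry f) p (0, 1) :=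
  funext fun p => pdt_eq_fderiv (hf p)

theorem contDiff_pdx {n : WithTop ℕ∞} (hf : ContDiff ℝ (n + 1) (Function.uncurry f)) :
    ContDiff ℝ n (Function.uncurry (pdx f)) := by
  rw [uncurry_pdx (hf.differentiable (by simp))]
  exact (hf.fderiv_right le_rfl).clm_apply contDiff_const

theorem contDiff_pdt {n : WithTop ℕ∞} (hf : ContDiff ℝ (n + 1) (Function.uncurry f)) :
    ContDiff ℝ n (Function.uncurry (pdt f)) := by
  rw [uncurry_pdt (hf.differentiable (by simp))]
  exact (hf.fderiv_right le_rfl).clm_apply contDiff_const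

theorem differentiable_pdx (hf : ContDiff ℝ 2 (Function.uncurry f)) :
    Differentiable ℝ (Function.uncurry (pdx f)) :=
  (contDiff_pdx (n := 1) hf).differentiable one_ne_zero

theorem differentiable_pdt (hf : ContDiff ℝ 2 (Function.uncurry f)) :
    Differentiable ℝ (Function.uncurry (pdt f)) :=
  (contDiff_pdt (n := 1) hf).differentiable one_ne_zero

theorem pdx_sub {g : ℝ → ℝ → E} (hf : DifferentiableAt ℝ (Function.uncurry f) (x, t))
    (hg : DifferentiableAt ℝ (Function.uncurry g) (x, t)) :
    pdx (fun x t => f x t - g x t) x t = pdx f x t - pdx g x t :=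
  deriv_fun_sub (hasDerivAt_fst_of_differentiableAt hf).differentiableAt
    (hasDerivAt_fst_of_differentiableAt hg).differentiableAt

theorem pdt_const_mul {A : Type*} [NormedRing A] [NormedAlgebra ℝ A] {f : ℝ → ℝ → A} (c : A)
    (hf : DifferentiableAt ℝ (Function.uncurry f) (x, t)) :
    pdt (fun x t => c * f x t) x t = c * pdt f x t :=
  deriv_const_mul c (hasDerivAt_snd_of_differentiableAt hf).differentiableAt

theorem pdx_pdt_comm (hf : ContDiff ℝ 2 (Function.uncurry f)) (x t : ℝ) :
    pdx (pdt f) x t = pdt (pdx f) x t := by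
  have hf₁ : Differentiable ℝ (Function.uncurry f) := hf.differentiable two_ne_zero
  have hf₂ : DifferentiableAt ℝ (fderiv ℝ (Function.uncurry f)) (x, t) :=
    (hf.fderiv_right (m := 1) le_rfl).differentiable one_ne_zero (x, t)
  have hsymm : IsSymmSndFDerivAt ℝ (Function.uncurry f) (x, t) :=
    hf.contDiffAt.isSymmSndFDerivAt (by simp)
  have fderiv_fderiv_apply (v w : ℝ × ℝ) :
      fderiv ℝ (fun p => fderiv ℝ (Function.uncurry f) p v) (x, t) w =
        fderiv ℝ (fderiv ℝ (Function.uncurry f)) (x, t) w v := by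
    simp [fderiv_clm_apply hf₂ (differentiableAt_const v)]
  rw [pdx_eq_fderiv (differentiable_pdt hf (x, t)), pdt_eq_fderiv (differentiable_pdx hf (x, t)),
    uncurry_pdx hf₁, uncurry_pdt hf₁, fderiv_fderiv_apply, fderiv_fderiv_apply, hsymm.eq]

end PartialDerivatives

section DualVariable

variable {𝕜 E : Type*} [NormedField 𝕜] [NormedAlgebra ℝ 𝕜] [NormedAddCommGroup E]
  [NormedSpace ℝ E] [NormedSpace 𝕜 E] [IsScalarTower ℝ 𝕜 E] {ψ : ℝ → ℝ → 𝕜} {u : ℝ → ℝ → E}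
  {x t : ℝ}

theorem pdx_smul (hψ : DifferentiableAt ℝ (Function.uncurry ψ) (x, t))
    (hu : DifferentiableAt ℝ (Function.uncurry u) (x, t)) :
    pdx (fun x t => ψ x t • u x t) x t = ψ x t • pdx u x t + pdx ψ x t • u x t :=
  deriv_fun_smul (hasDerivAt_fst_of_differentiableAt hψ).differentiableAt
    (hasDerivAt_fst_of_differentiableAt hu).differentiableAt

theorem pdt_smul (hψ : DifferentiableAt ℝ (Function.uncurry ψ) (x, t))
    (hu : DifferentiableAt ℝ (Function.uncurry u) (x, t)) :
    pdt (fun x t => ψ x t • u x t) x t = ψ x t • pdt u x t + pdt ψ x t • u x t :=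
  deriv_fun_smul (hasDerivAt_snd_of_differentiableAt hψ).differentiableAt
    (hasDerivAt_snd_of_differentiableAt hu).differentiableAt

theorem pdx_wronskian (hψ : ContDiff ℝ 2 (Function.uncurry ψ))
    (hu : ContDiff ℝ 2 (Function.uncurry u)) (x t : ℝ) :
    pdx (fun x t => pdx ψ x t • u x t - ψ x t • pdx u x t) x t =
      pdx (pdx ψ) x t • u x t - ψ x t • pdx (pdx u) x t := by
  have hψ₁ := hψ.differentiable two_ne_zero (x, t)
  have hu₁ := hu.differentiable two_ne_zero (x, t)
  have hψ₂ := differentiable_pdx hψ (x, t)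
  have hu₂ := differentiable_pdx hu (x, t)
  calc pdx (fun x t => pdx ψ x t • u x t - ψ x t • pdx u x t) x t
      = pdx (fun x t => pdx ψ x t • u x t) x t - pdx (fun x t => ψ x t • pdx u x t) x t :=
        pdx_sub (hψ₂.smul hu₁) (hψ₁.smul hu₂)
    _ = pdx (pdx ψ) x t • u x t - ψ x t • pdx (pdx u) x t := by
        rw [pdx_smul hψ₂ hu₁, pdx_smul hψ₁ hu₂]
        abel

theorem smul_pdt_add_smul_of_compatible {φ : ℝ → ℝ → E} {c : 𝕜}
    (hu : ContDiff ℝ 2 (Function.uncurry u)) (hψ : ContDiff ℝ 2 (Function.uncurry ψ))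
    (hφ : ContDiff ℝ 2 (Function.uncurry φ))
    (hφx : ∀ x t, pdx φ x t = (c * ψ x t) • u x t)
    (hφt : ∀ x t, pdt φ x t = pdx ψ x t • u x t - ψ x t • pdx u x t) (x t : ℝ) :
    (c * ψ x t) • pdt u x t + (c * pdt ψ x t) • u x t =
      pdx (pdx ψ) x t • u x t - ψ x t • pdx (pdx u) x t := by
  have hψ₁ := hψ.differentiable two_ne_zero (x, t)
  have hu₁ := hu.differentiable two_ne_zero (x, t)
  have hcψ₁ : DifferentiableAt ℝ (Function.uncurry fun x t => c * ψ x t) (x, t) := hψ₁.const_mul c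
  calc (c * ψ x t) • pdt u x t + (c * pdt ψ x t) • u x t
      = pdt (fun x t => (c * ψ x t) • u x t) x t := by
        rw [pdt_smul hcψ₁ hu₁, pdt_const_mul c hψ₁]
    _ = pdt (pdx φ) x t := by rw [funext₂ hφx]
    _ = pdx (pdt φ) x t := (pdx_pdt_comm hφ x t).symm
    _ = pdx (fun x t => pdx ψ x t • u x t - ψ x t • pdx u x t) x t := by rw [funext₂ hφt]
    _ = pdx (pdx ψ) x t • u x t - ψ x t • pdx (pdx u) x t := pdx_wronskian hψ hu x t

theorem stmt7_general {φ : ℝ → ℝ → E} {L : ℝ → ℝ → 𝕜} {c : 𝕜}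
    (hu : ContDiff ℝ 2 (Function.uncurry u)) (hψ : ContDiff ℝ 2 (Function.uncurry ψ))
    (hφ : ContDiff ℝ 2 (Function.uncurry φ))
    (hφx : ∀ x t, pdx φ x t = (c * ψ x t) • u x t)
    (hψt : ∀ x t, c * pdt ψ x t = pdx (pdx ψ) x t + L x t * ψ x t)
    (hφt : ∀ x t, pdt φ x t = pdx ψ x t • u x t - ψ x t • pdx u x t)
    (hψ0 : ψ x t ≠ 0) :
    c • pdt u x t = -pdx (pdx u) x t - L x t • u x t := by
  have hcompat := smul_pdt_add_smul_of_compatible hu hψ hφ hφx hφt x t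
  rw [hψt] at hcompat
  refine smul_right_injective E hψ0 ?_
  calc ψ x t • c • pdt u x t
      = (c * ψ x t) • pdt u x t := by module
    _ = pdx (pdx ψ) x t • u x t - ψ x t • pdx (pdx u) x t
          - (pdx (pdx ψ) x t + L x t * ψ x t) • u x t := eq_sub_of_add_eq hcompat
    _ = ψ x t • (-pdx (pdx u) x t - L x t • u x t) := by module

end DualVariable

theorem stmt7 {N : ℕ} (hN : 1 ≤ N)
    (S Sb : ℝ → ℝ → Fin N → ℂ) (L ψ : ℝ → ℝ → ℂ) (φ : ℝ → ℝ → Fin N → ℂ) (ζ : ℂ)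
    (hS3 : ContDiff ℝ 3 (Function.uncurry S)) (hSb3 : ContDiff ℝ 3 (Function.uncurry Sb))
    (hL3 : ContDiff ℝ 3 (Function.uncurry L)) (hψ3 : ContDiff ℝ 3 (Function.uncurry ψ))
    (hφ3 : ContDiff ℝ 3 (Function.uncurry φ))
    (hspec : ∀ (x t : ℝ),
      pdx (pdx ψ) x t + L x t * ψ x t + pair (S x t) (φ x t) = ζ * ψ x t)
    (hφx : ∀ (x t : ℝ), pdx φ x t = (Complex.I * ψ x t) • Sb x t)
    (hψt : ∀ (x t : ℝ), Complex.I * pdt ψ x t = pdx (pdx ψ) x t + L x t * ψ x t)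
    (hφt : ∀ (x t : ℝ), pdt φ x t = (pdx ψ x t) • Sb x t - (ψ x t) • pdx Sb x t)
    (hψ0 : ∀ (x t : ℝ), ψ x t ≠ 0) :
    ∀ (x t : ℝ),
      Complex.I • pdt Sb x t = -(pdx (pdx Sb) x t) - (L x t) • Sb x t := by
  intro x t
  exact stmt7_general (hSb3.of_le (by norm_num)) (hψ3.of_le (by norm_num))
    (hφ3.of_le (by norm_num)) hφx hψt hφt (hψ0 x t)
end

section
/- Suppose q_n(t), q̄_n(t) ∈ ℂ^N and v_n(t) ∈ ℂ (n ∈ ℤ, t ∈ ℝ, differentiable in t) satisfy the system: i q_{n,t} = v_n q_{n+1}, i q̄_{n,t} = −v_n q̄_{n−1}, and v_{n,t} = (1/2) v_n Δ⁺⟨q_n, q̄_{n−1}⟩ = (1/2) v_n (⟨q_{n+1}, q̄_n⟩ − ⟨q_n, q̄_{n−1}⟩), for all n and t. Then for every n the quantity v_n − (i/2) ⟨q_n, q̄_n⟩ is conserved: its time derivative vanishes for all t. -/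
open Complex BigOperators

/-!
For a continuous bilinear pairing `B`, Leibniz' rule and the equations for `q` and `qb` turn the
derivative of `c * B (q n) (qb n)` into `v n` times the forward difference of
`B (q n) (qb (n - 1))`. The equation for `v` says that `a` times this is the derivative of `v n`.
The paper's system is the case `c = i`, `a = 1 / 2`.
-/

section BilinearPairing

variable {𝕜 𝕂 E F : Type*} [NontriviallyNormedField 𝕜] [NontriviallyNormedField 𝕂]
  [NormedAlgebra 𝕜 𝕂]
  [NormedAddCommGroup E] [NormedSpace 𝕂 E] [NormedSpace 𝕜 E] [IsScalarTower 𝕜 𝕂 E]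
  [NormedAddCommGroup F] [NormedSpace 𝕂 F] [NormedSpace 𝕜 F] [IsScalarTower 𝕜 𝕂 F]
  (B : E →L[𝕂] F →L[𝕂] 𝕂)

theorem hasDerivAt_const_mul_bilinear_of_smul_eq {x : 𝕜 → E} {y : 𝕜 → F} {x' xnext : E}
    {y' yprev : F} {c w : 𝕂} {t : 𝕜} (hx : HasDerivAt x x' t) (hy : HasDerivAt y y' t)
    (hx' : c • x' = w • xnext) (hy' : c • y' = -(w • yprev)) :
    HasDerivAt (fun s => c * B (x s) (y s)) (w * (B xnext (y t) - B (x t) yprev)) t := by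
  have leibniz : HasDerivAt (fun s => B (x s) (y s)) (B (x t) y' + B x' (y t)) t :=
    (B.bilinearRestrictScalars 𝕜).hasDerivAt_of_bilinear (fun _ => hx) (fun _ => hy)
  refine (leibniz.const_mul c).congr_deriv ?_
  calc c * (B (x t) y' + B x' (y t))
      = B (x t) (c • y') + B (c • x') (y t) := by
        simp only [map_smul, smul_apply, smul_eq_mul, mul_add]
    _ = B (x t) (-(w • yprev)) + B (w • xnext) (y t) := by rw [hx', hy']
    _ = w * (B xnext (y t) - B (x t) yprev) := by
        simp only [map_neg, map_smul, smul_apply, smul_eq_mul]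
        ring

theorem stmt14_general {q : ℤ → 𝕜 → E} {qb : ℤ → 𝕜 → F} {v : ℤ → 𝕜 → 𝕂}
    {a c : 𝕂} {n : ℤ} {t : 𝕜}
    (hq : DifferentiableAt 𝕜 (q n) t) (hqb : DifferentiableAt 𝕜 (qb n) t)
    (hv : DifferentiableAt 𝕜 (v n) t)
    (q_eq : c • deriv (q n) t = v n t • q (n + 1) t)
    (qb_eq : c • deriv (qb n) t = -(v n t • qb (n - 1) t))
    (v_eq : deriv (v n) t
      = a * v n t * (B (q (n + 1) t) (qb n t) - B (q n t) (qb (n - 1) t))) :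
    HasDerivAt (fun s => v n s - a * (c * B (q n s) (qb n s))) 0 t := by
  have pairing_deriv := hasDerivAt_const_mul_bilinear_of_smul_eq B
    hq.hasDerivAt hqb.hasDerivAt q_eq qb_eq
  refine (hv.hasDerivAt.sub (pairing_deriv.const_mul a)).congr_deriv ?_
  rw [v_eq, mul_assoc, sub_self]

end BilinearPairing

theorem pair_eq_dotProductBilin {N : ℕ} (a b : Fin N → ℂ) :
    pair a b = (dotProductBilin ℂ ℂ).toContinuousBilinearMap a b := rfl

theorem stmt14 {N : ℕ} (hN : 1 ≤ N)
    (q qb : ℤ → ℝ → Fin N → ℂ) (v : ℤ → ℝ → ℂ)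
    (hqd : ∀ n, Differentiable ℝ (q n)) (hqbd : ∀ n, Differentiable ℝ (qb n))
    (hvd : ∀ n, Differentiable ℝ (v n))
    (h1 : ∀ (n : ℤ) (t : ℝ), Complex.I • deriv (q n) t = (v n t) • q (n+1) t)
    (h2 : ∀ (n : ℤ) (t : ℝ), Complex.I • deriv (qb n) t = -((v n t) • qb (n-1) t))
    (h3 : ∀ (n : ℤ) (t : ℝ), deriv (v n) t
      = (1/2) * v n t * (pair (q (n+1) t) (qb n t) - pair (q n t) (qb (n-1) t))) :
    ∀ (n : ℤ) (t : ℝ),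
      deriv (fun s => v n s - (Complex.I/2) * pair (q n s) (qb n s)) t = 0 := by
  intro n t
  simpa only [pair_eq_dotProductBilin, div_eq_inv_mul, mul_one, mul_assoc] using
    (stmt14_general (dotProductBilin ℂ ℂ).toContinuousBilinearMap
      (hqd n t) (hqbd n t) (hvd n t) (h1 n t) (h2 n t) (h3 n t)).deriv
end
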